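/- Let K be a field and L a Lie algebra over K, and let U = UniversalEnvelopingAlgebra K L be its universal enveloping algebra. If a, b ∈ U satisfy a * b = 1, then there exists a nonzero scalar c ∈ K with a = algebraMap K U c and b = algebraMap K U c⁻¹. In other words, U has no one-sided invertible elements other than the images of the nonzero elements of K. -/

import Mathlib

universe u v

/-!
Transport the product of the enveloping algebra to the polynomials in a linearly ordered basis of
`L` by reading a monomial as the increasing product of its variables. If this product agrees with
that of polynomials up to terms of lower degree, then over a domain the degree is additive, so the
factors of `1` have degree `0`, that is, they are scalars.

The identification with polynomials is the Poincaré–Birkhoff–Witt theorem. Its proof makes `L` act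
on polynomials as left multiplication will: a basis vector multiplies by its variable if this is at
most every variable of the monomial, and the commutation relations determine the lower order terms
of the other cases by recursion on the degree. That this is a Lie action also follows by induction
on the degree: the relations used to define it hold by construction, and the Bianchi identity for
its curvature yields all the others.
-/

open MvPolynomial
open UniversalEnvelopingAlgebra (ι mkAlgHom)

namespace PoincareBirkhoffWitt

section Curvature

variable {R L L' : Type*} [CommRing R] [LieRing L] [LieAlgebra R L] [LieRing L'] [LieAlgebra R L']

/-- The failure `⁅f x, f y⁆ - f ⁅x, y⁆` of a linear map between Lie algebras to be a Lie algebra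
morphism, as a bilinear map. -/
def curvature (f : L →ₗ[R] L') : L →ₗ[R] L →ₗ[R] L' :=
  LinearMap.mk₂ R (fun x y ↦ ⁅f x, f y⁆ - f ⁅x, y⁆)
    (fun x x' y ↦ by simp only [map_add, add_lie]; abel)
    (fun c x y ↦ by simp only [map_smul, smul_lie, smul_sub])
    (fun x y y' ↦ by simp only [map_add, lie_add]; abel)
    (fun c x y ↦ by simp only [map_smul, lie_smul, smul_sub])

variable (f : L →ₗ[R] L') (x y z : L)

lemma curvature_apply : curvature f x y = ⁅f x, f y⁆ - f ⁅x, y⁆ := rfl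

lemma curvature_self : curvature f x x = 0 := by simp [curvature_apply]

lemma curvature_swap : curvature f y x = -curvature f x y := by
  rw [curvature_apply, curvature_apply, ← lie_skew (f y), ← lie_skew y, map_neg]
  abel

lemma bianchi_identity :
    (⁅f x, curvature f y z⁆ + ⁅f y, curvature f z x⁆ + ⁅f z, curvature f x y⁆) +
      (curvature f x ⁅y, z⁆ + curvature f y ⁅z, x⁆ + curvature f z ⁅x, y⁆) = 0 := by
  calc
    _ = (⁅f x, ⁅f y, f z⁆⁆ + ⁅f y, ⁅f z, f x⁆⁆ + ⁅f z, ⁅f x, f y⁆⁆) -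
          f (⁅x, ⁅y, z⁆⁆ + ⁅y, ⁅z, x⁆⁆ + ⁅z, ⁅x, y⁆⁆) := by
      simp only [curvature_apply, lie_sub, map_add]
      abel
    _ = 0 := by rw [lie_jacobi, lie_jacobi, map_zero, sub_zero]

attribute [local instance] LieRing.ofAssociativeRing in
lemma curvature_end_apply {V : Type*} [AddCommGroup V] [Module R V] (Φ : L →ₗ[R] Module.End R V)
    (v : V) : curvature Φ x y v = Φ x (Φ y v) - Φ y (Φ x v) - Φ ⁅x, y⁆ v :=
  rfl

end Curvature

section Polynomials

variable {I R : Type*} [CommRing R]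

lemma forall_le_single_add [LinearOrder I] {i j : I} {n : ℕ} {N : I →₀ ℕ} (hij : i ≤ j)
    (hi : ∀ k ∈ N.support, i ≤ k) : ∀ k ∈ (Finsupp.single j n + N).support, i ≤ k := by
  intro k hk
  rcases Finset.mem_union.1 (Finsupp.support_add hk) with hk | hk
  · exact hij.trans (Finset.mem_singleton.1 (Finsupp.support_single_subset hk)).ge
  · exact hi k hk

lemma exponent_induction [LinearOrder I] {motive : (I →₀ ℕ) → Prop} (M : I →₀ ℕ)
    (zero : motive 0)
    (single_add : ∀ (j : I) (N : I →₀ ℕ), (∀ k ∈ N.support, j ≤ k) → motive N →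
      motive (Finsupp.single j 1 + N)) : motive M := by
  induction M using Finsupp.induction_on_min with
  | zero => exact zero
  | single_add j n N hj hn ih =>
    clear hn
    induction n with
    | zero => simpa using ih
    | succ n ihn =>
      rw [add_comm n 1, Finsupp.single_add, add_assoc]
      exact single_add j _ (forall_le_single_add le_rfl fun k hk ↦ (hj k hk).le) ihn

variable (I R) in
/-- The polynomials of total degree strictly less than `n`. Bounding the degree strictly gives
`degreeLT I R 0 = ⊥`, so the estimates of lower order terms need no subtraction. -/
noncomputable def degreeLT (n : ℕ) : Submodule R (MvPolynomial I R) :=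
  restrictSupport R {M | M.degree < n}

variable {m n : ℕ} {M : I →₀ ℕ} {p q : MvPolynomial I R}

lemma degreeLT_le_iff {P : Submodule R (MvPolynomial I R)} :
    degreeLT I R n ≤ P ↔ ∀ M : I →₀ ℕ, M.degree < n → monomial M 1 ∈ P := by
  rw [degreeLT, restrictSupport_eq_span, Submodule.span_le, Set.image_subset_iff]
  rfl

lemma monomial_mem_degreeLT (h : M.degree < n) : monomial M (1 : R) ∈ degreeLT I R n :=
  degreeLT_le_iff.1 le_rfl M h

lemma degreeLT_mono (h : m ≤ n) : degreeLT I R m ≤ degreeLT I R n :=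
  restrictSupport_mono R fun _ hM ↦ hM.trans_le h

lemma mem_degreeLT_succ : p ∈ degreeLT I R (n + 1) ↔ p.totalDegree ≤ n := by
  rw [← mem_restrictTotalDegree, degreeLT, restrictTotalDegree]
  simp only [Nat.lt_succ_iff]
  rfl

lemma monomial_mul_mem_degreeLT (hp : p ∈ degreeLT I R n) :
    monomial M 1 * p ∈ degreeLT I R (n + M.degree) := by
  suffices degreeLT I R n ≤
      (degreeLT I R (n + M.degree)).comap (LinearMap.mulLeft R (monomial M 1)) from this hp
  refine degreeLT_le_iff.2 fun N hN ↦ ?_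
  rw [Submodule.mem_comap, LinearMap.mulLeft_apply, monomial_mul, one_mul]
  exact monomial_mem_degreeLT (by rw [map_add]; omega)

lemma X_mul_mem_degreeLT (i : I) (hp : p ∈ degreeLT I R n) : X i * p ∈ degreeLT I R (n + 1) := by
  simpa only [X, Finsupp.degree_single] using monomial_mul_mem_degreeLT (M := Finsupp.single i 1) hp

lemma degreeLT_zero : degreeLT I R 0 = ⊥ :=
  le_bot_iff.1 <| degreeLT_le_iff.2 fun _ hM ↦ absurd hM (Nat.not_lt_zero _)

lemma totalDegree_eq_of_sub_mem_degreeLT (h : q - p ∈ degreeLT I R p.totalDegree) :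
    q.totalDegree = p.totalDegree := by
  rcases hn : p.totalDegree with _ | n
  · rw [hn, degreeLT_zero, Submodule.mem_bot, sub_eq_zero] at h
    rw [h, hn]
  · rw [hn, mem_degreeLT_succ] at h
    rw [← add_sub_cancel p q, totalDegree_add_eq_left_of_totalDegree_lt (by omega), hn]

lemma monomial_zero_one : monomial (0 : I →₀ ℕ) (1 : R) = 1 := rfl

lemma monomial_single_add (j : I) (N : I →₀ ℕ) :
    monomial (Finsupp.single j 1 + N) (1 : R) = X j * monomial N 1 := by
  rw [X, monomial_mul, one_mul]

section Bilinear

variable {L V : Type*} [AddCommGroup L] [Module R L] [AddCommGroup V] [Module R V]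

lemma constr_basisMonomials_monomial (f : (I →₀ ℕ) → V) (M : I →₀ ℕ) :
    (basisMonomials I R).constr R f (monomial M 1) = f M :=
  (basisMonomials I R).constr_basis R f M

variable (B : Module.Basis I R L) {Φ Ψ : L →ₗ[R] MvPolynomial I R →ₗ[R] V}

lemma apply_mem_of_basis {P : Submodule R V}
    (h : ∀ i M, M.degree < n → Φ (B i) (monomial M 1) ∈ P) (x : L) (hp : p ∈ degreeLT I R n) :
    Φ x p ∈ P := by
  have basis_mem (i : I) : Φ (B i) p ∈ P := by
    suffices degreeLT I R n ≤ P.comap (Φ (B i)) from this hp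
    exact degreeLT_le_iff.2 (h i)
  suffices Submodule.span R (Set.range B) ≤ P.comap (Φ.flip p) from this (B.mem_span x)
  rw [Submodule.span_le]
  rintro _ ⟨i, rfl⟩
  exact basis_mem i

lemma apply_eq_of_basis
    (h : ∀ i M, M.degree < n → Φ (B i) (monomial M 1) = Ψ (B i) (monomial M 1))
    (x : L) (hp : p ∈ degreeLT I R n) : Φ x p = Ψ x p := by
  suffices (Φ - Ψ) x p ∈ (⊥ : Submodule R V) from sub_eq_zero.1 this
  exact apply_mem_of_basis B (fun i M hM ↦ sub_eq_zero.2 (h i M hM)) x hp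

end Bilinear

end Polynomials

section EnvelopingAlgebra

variable (R L : Type*) [CommRing R] [LieRing L] [LieAlgebra R L]

lemma adjoin_range_ι :
    Algebra.adjoin R (Set.range (ι R : L → UniversalEnvelopingAlgebra R L)) = ⊤ := by
  have surjective : Function.Surjective (mkAlgHom R L) := RingCon.mkₐ_surjective _
  rw [← (AlgHom.range_eq_top _).2 surjective, ← Algebra.map_top, ← TensorAlgebra.adjoin_range_ι,
    AlgHom.map_adjoin, ← Set.range_comp]
  rfl

variable {R L}

attribute [local instance] LieRing.ofAssociativeRing in
lemma ι_mul_ι (x y : L) :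
    (ι R x * ι R y : UniversalEnvelopingAlgebra R L) = ι R y * ι R x + ι R ⁅x, y⁆ := by
  rw [LieHom.map_lie, LieRing.of_associative_ring_bracket, add_sub_cancel]

end EnvelopingAlgebra

section Action

variable {I R L : Type*} [CommRing R] [LieRing L] [LieAlgebra R L]

/-- The action of `L` on polynomials in which a basis vector multiplies by its variable. It is the
leading part of the action of `L` obtained by transport from the enveloping algebra. -/
noncomputable def symbolAction (B : Module.Basis I R L) :
    L →ₗ[R] Module.End R (MvPolynomial I R) :=
  B.constr R fun i ↦ LinearMap.mulLeft R (X i)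

lemma symbolAction_basis (B : Module.Basis I R L) (i : I) (p : MvPolynomial I R) :
    symbolAction B (B i) p = X i * p := by
  simp [symbolAction]

/-- `Φ` differs from multiplication by symbols only by terms of lower degree. -/
def HasSymbolAction (B : Module.Basis I R L) (Φ : L →ₗ[R] Module.End R (MvPolynomial I R)) : Prop :=
  ∀ (x : L) (n : ℕ) (p : MvPolynomial I R), p ∈ degreeLT I R n →
    Φ x p - symbolAction B x p ∈ degreeLT I R n

variable (B : Module.Basis I R L) {m n : ℕ} {M N : I →₀ ℕ} {p q : MvPolynomial I R}
  {Φ Ψ : L →ₗ[R] Module.End R (MvPolynomial I R)}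

lemma symbolAction_mem (x : L) (hp : p ∈ degreeLT I R n) :
    symbolAction B x p ∈ degreeLT I R (n + 1) := by
  refine apply_mem_of_basis B (fun i M hM ↦ ?_) x hp
  rw [symbolAction_basis]
  exact X_mul_mem_degreeLT i (monomial_mem_degreeLT hM)

variable {B} in
lemma HasSymbolAction.apply_mem (h : HasSymbolAction B Φ) (x : L) (hp : p ∈ degreeLT I R n) :
    Φ x p ∈ degreeLT I R (n + 1) := by
  simpa using add_mem (degreeLT_mono n.le_succ (h x n p hp)) (symbolAction_mem B x hp)

variable [LinearOrder I]

/-- The variables of the monomial `M` with multiplicity, in increasing order. -/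
noncomputable def orderedWord (M : I →₀ ℕ) : List I := (Finsupp.toMultiset M).sort (· ≤ ·)

lemma orderedWord_zero : orderedWord (0 : I →₀ ℕ) = [] := by simp [orderedWord]

lemma orderedWord_single_add {j : I} (hj : ∀ k ∈ N.support, j ≤ k) :
    orderedWord (Finsupp.single j 1 + N) = j :: orderedWord N := by
  rw [orderedWord, map_add, Finsupp.toMultiset_single, one_smul, Multiset.singleton_add]
  exact Multiset.sort_cons _ _ _ fun k hk ↦ hj k ((Finsupp.mem_toMultiset ..).1 hk)

lemma forall_le_or_exists_single_add (i : I) (M : I →₀ ℕ) :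
    (∀ k ∈ M.support, i ≤ k) ∨
      ∃ j N, j < i ∧ (∀ k ∈ N.support, j ≤ k) ∧ M = Finsupp.single j 1 + N := by
  induction M using exponent_induction with
  | zero => simp
  | single_add j N hj _ =>
    rcases lt_or_ge j i with hji | hij
    · exact .inr ⟨j, N, hji, hj, rfl⟩
    · exact .inl (forall_le_single_add hij fun k hk ↦ hij.trans (hj k hk))

/-- The lower order part of the action of `B i` on the monomial `M` that is forced by the
commutation relation with `B j`, where `j` is the least variable of `M` and `j < i`. -/
noncomputable def correction (Φ : L →ₗ[R] Module.End R (MvPolynomial I R)) (i : I) (M : I →₀ ℕ) :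
    MvPolynomial I R :=
  match orderedWord M with
  | [] => 0
  | j :: _ =>
    if i ≤ j then 0 else
      Φ (B j) (Φ (B i) (monomial (M - Finsupp.single j 1) 1) -
          symbolAction B (B i) (monomial (M - Finsupp.single j 1) 1)) +
        Φ ⁅B i, B j⁆ (monomial (M - Finsupp.single j 1) 1)

lemma correction_of_le {i : I} (hi : ∀ k ∈ M.support, i ≤ k) : correction B Φ i M = 0 := by
  induction M using exponent_induction with
  | zero => rw [correction, orderedWord_zero]
  | single_add j N hj _ => simp [correction, orderedWord_single_add hj, hi j (by simp)]

lemma correction_single_add {i j : I} (hji : j < i) (hj : ∀ k ∈ N.support, j ≤ k) :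
    correction B Φ i (Finsupp.single j 1 + N) =
      Φ (B j) (Φ (B i) (monomial N 1) - symbolAction B (B i) (monomial N 1)) +
        Φ ⁅B i, B j⁆ (monomial N 1) := by
  simp only [correction, orderedWord_single_add hj, if_neg hji.not_ge, add_tsub_cancel_left]

lemma correction_mem (hΦ : HasSymbolAction B Φ) (i : I) (hM : M.degree < n) :
    correction B Φ i M ∈ degreeLT I R n := by
  obtain hi | ⟨j, N, hji, hj, rfl⟩ := forall_le_or_exists_single_add i M
  · exact (correction_of_le B hi).symm ▸ zero_mem _
  · have hN : monomial N (1 : R) ∈ degreeLT I R (N.degree + 1) :=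
      monomial_mem_degreeLT (Nat.lt_succ_self _)
    rw [correction_single_add B hji hj]
    rw [map_add, Finsupp.degree_single] at hM
    exact degreeLT_mono (by omega) <|
      add_mem (hΦ.apply_mem (B j) (hΦ (B i) _ _ hN)) (hΦ.apply_mem ⁅B i, B j⁆ hN)

lemma correction_congr (hΨ : HasSymbolAction B Ψ)
    (h : ∀ (x : L) (p : MvPolynomial I R), p ∈ degreeLT I R n → Φ x p = Ψ x p) (i : I)
    (hM : M.degree ≤ n) : correction B Φ i M = correction B Ψ i M := by
  obtain hi | ⟨j, N, hji, hj, rfl⟩ := forall_le_or_exists_single_add i M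
  · rw [correction_of_le B hi, correction_of_le B hi]
  · rw [map_add, Finsupp.degree_single] at hM
    have hN : monomial N (1 : R) ∈ degreeLT I R n := monomial_mem_degreeLT (by omega)
    rw [correction_single_add B hji hj, correction_single_add B hji hj, h _ _ hN, h _ _ hN,
      h _ _ (hΨ (B i) n _ hN)]

/-- Multiplication by symbols, corrected by the lower order terms computed from `Φ`. The action of
`L` on polynomials is a fixed point of this operator. -/
noncomputable def correctedAction (Φ : L →ₗ[R] Module.End R (MvPolynomial I R)) :
    L →ₗ[R] Module.End R (MvPolynomial I R) :=
  symbolAction B + B.constr R fun i ↦ (basisMonomials I R).constr R (correction B Φ i)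

lemma correctedAction_monomial (i : I) (M : I →₀ ℕ) :
    correctedAction B Φ (B i) (monomial M 1) = X i * monomial M 1 + correction B Φ i M := by
  rw [correctedAction, LinearMap.add_apply, LinearMap.add_apply, symbolAction_basis,
    Module.Basis.constr_basis, constr_basisMonomials_monomial]

lemma HasSymbolAction.correctedAction (hΦ : HasSymbolAction B Φ) :
    HasSymbolAction B (correctedAction B Φ) := by
  intro x n p hp
  refine apply_mem_of_basis B (Φ := PoincareBirkhoffWitt.correctedAction B Φ - symbolAction B)
    (fun i M hM ↦ ?_) x hp
  rw [LinearMap.sub_apply, LinearMap.sub_apply, correctedAction_monomial, symbolAction_basis,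
    add_sub_cancel_left]
  exact correction_mem B hΦ i hM

/-- The `n`-th approximation to the action of `L` on polynomials, which is exact in degrees less
than `n`. -/
noncomputable def approxAction : ℕ → L →ₗ[R] Module.End R (MvPolynomial I R)
  | 0 => symbolAction B
  | n + 1 => correctedAction B (approxAction n)

lemma hasSymbolAction_approxAction (n : ℕ) : HasSymbolAction B (approxAction B n) := by
  induction n with
  | zero => exact fun x n p _ ↦ by simp [approxAction]
  | succ n ih => exact ih.correctedAction

lemma approxAction_succ (x : L) (hp : p ∈ degreeLT I R n) :
    approxAction B (n + 1) x p = approxAction B n x p := by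
  induction n generalizing x p with
  | zero => exact apply_eq_of_basis B (fun _ M hM ↦ absurd hM (Nat.not_lt_zero _)) x hp
  | succ n ih =>
    refine apply_eq_of_basis B (fun i M hM ↦ ?_) x hp
    rw [approxAction, approxAction, correctedAction_monomial, correctedAction_monomial,
      ← approxAction, correction_congr B (hasSymbolAction_approxAction B n) (fun _ _ ↦ ih _) i
        (Nat.lt_succ_iff.1 hM)]

lemma approxAction_of_le (hmn : m ≤ n) (x : L) (hp : p ∈ degreeLT I R m) :
    approxAction B n x p = approxAction B m x p := by
  induction n, hmn using Nat.le_induction with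
  | base => rfl
  | succ n hn ih => rw [approxAction_succ B x (degreeLT_mono hn hp), ih]

/-- The action of `L` on polynomials obtained from left multiplication on the enveloping algebra by
identifying a monomial with the ordered product of its variables. -/
noncomputable def action : L →ₗ[R] Module.End R (MvPolynomial I R) :=
  B.constr R fun i ↦ (basisMonomials I R).constr R fun M ↦
    approxAction B (M.degree + 1) (B i) (monomial M 1)

lemma action_eq_approxAction (x : L) (hp : p ∈ degreeLT I R n) :
    action B x p = approxAction B n x p := by
  refine apply_eq_of_basis B (fun i M hM ↦ ?_) x hp
  rw [approxAction_of_le B hM _ (monomial_mem_degreeLT (Nat.lt_succ_self _)), action,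
    Module.Basis.constr_basis, constr_basisMonomials_monomial]

lemma hasSymbolAction_action : HasSymbolAction B (action B) := by
  intro x n p hp
  rw [action_eq_approxAction B x hp]
  exact hasSymbolAction_approxAction B n x n p hp

lemma action_monomial (i : I) (M : I →₀ ℕ) :
    action B (B i) (monomial M 1) = X i * monomial M 1 + correction B (action B) i M := by
  rw [action_eq_approxAction B _ (monomial_mem_degreeLT (Nat.lt_succ_self _)), approxAction,
    correctedAction_monomial, correction_congr B (hasSymbolAction_approxAction B _)
      (fun x _ ↦ action_eq_approxAction B x) i le_rfl]

lemma action_monomial_of_le {i : I} (hi : ∀ k ∈ M.support, i ≤ k) :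
    action B (B i) (monomial M 1) = X i * monomial M 1 := by
  rw [action_monomial, correction_of_le B hi, add_zero]

section Flatness

attribute [local instance] LieRing.ofAssociativeRing

lemma curvature_action_monomial_of_le {i j : I} (hji : j < i) (hj : ∀ k ∈ M.support, j ≤ k) :
    curvature (action B) (B i) (B j) (monomial M 1) = 0 := by
  have action_j : action B (B j) (X i * monomial M 1) = X i * (X j * monomial M 1) := by
    rw [← monomial_single_add, action_monomial_of_le B (forall_le_single_add hji.le hj),
      monomial_single_add]
    ring
  rw [curvature_end_apply, action_monomial_of_le B hj, ← monomial_single_add, action_monomial,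
    correction_single_add B hji hj, symbolAction_basis, map_sub, action_j, monomial_single_add]
  abel

lemma curvature_action_eq_zero_of_monomial
    (h : ∀ i j M, j < i → M.degree < n →
      curvature (action B) (B i) (B j) (monomial M 1) = 0)
    (x y : L) (hp : p ∈ degreeLT I R n) : curvature (action B) x y p = 0 := by
  have basis_basis (i j : I) {M : I →₀ ℕ} (hM : M.degree < n) :
      curvature (action B) (B i) (B j) (monomial M 1) = 0 := by
    rcases lt_trichotomy i j with hij | rfl | hji
    · rw [curvature_swap, LinearMap.neg_apply, h j i M hij hM, neg_zero]
    · rw [curvature_self, LinearMap.zero_apply]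
    · exact h i j M hji hM
  have basis_left (i : I) (y : L) {q : MvPolynomial I R} (hq : q ∈ degreeLT I R n) :
      curvature (action B) (B i) y q = 0 :=
    apply_eq_of_basis B (Ψ := 0) (fun j _ hM ↦ basis_basis i j hM) y hq
  exact apply_eq_of_basis B (Φ := (curvature (action B)).flip y) (Ψ := 0)
    (fun i _ hM ↦ basis_left i y (monomial_mem_degreeLT hM)) x hp

lemma curvature_action_action_monomial {a b k : I} (hka : k < a) (hkb : k < b)
    (hk : ∀ l ∈ M.support, k ≤ l)
    (h : ∀ q ∈ degreeLT I R (M.degree + 1), curvature (action B) (B a) (B k) q = 0) :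
    curvature (action B) (B a) (B k) (action B (B b) (monomial M 1)) = 0 := by
  have leading : curvature (action B) (B a) (B k) (X b * monomial M 1) = 0 := by
    rw [← monomial_single_add]
    exact curvature_action_monomial_of_le B hka (forall_le_single_add hkb.le hk)
  have lower := h _ <|
    hasSymbolAction_action B (B b) _ _ (monomial_mem_degreeLT (Nat.lt_succ_self M.degree))
  rwa [symbolAction_basis, map_sub, leading, sub_zero] at lower

lemma curvature_action_monomial_single_add {i j k : I} (hkj : k < j) (hji : j < i)
    (hk : ∀ l ∈ M.support, k ≤ l)
    (h : ∀ (x y : L), ∀ q ∈ degreeLT I R (M.degree + 1), curvature (action B) x y q = 0) :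
    curvature (action B) (B i) (B j) (monomial (Finsupp.single k 1 + M) 1) = 0 := by
  have hki := hkj.trans hji
  have flat (x y : L) : curvature (action B) x y (monomial M 1) = 0 :=
    h x y _ (monomial_mem_degreeLT (Nat.lt_succ_self M.degree))
  have term_i : curvature (action B) (B j) (B k) (action B (B i) (monomial M 1)) = 0 :=
    curvature_action_action_monomial B hkj hki hk (h _ _)
  have term_j : curvature (action B) (B k) (B i) (action B (B j) (monomial M 1)) = 0 := by
    rw [curvature_swap, LinearMap.neg_apply,
      curvature_action_action_monomial B hki hkj hk (h _ _), neg_zero]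
  -- All terms of the Bianchi identity applied to `M` vanish, except possibly the one containing
  -- the curvature of `B i` and `B j` at `action B (B k) M = X k * M`.
  have bianchi :=
    LinearMap.congr_fun (bianchi_identity (action B) (B i) (B j) (B k)) (monomial M 1)
  simpa only [LieRing.of_associative_ring_bracket, LinearMap.add_apply, LinearMap.sub_apply,
    Module.End.mul_apply, LinearMap.zero_apply, flat, map_zero, term_i, term_j, add_zero, zero_add,
    sub_zero, zero_sub, neg_eq_zero, action_monomial_of_le B hk, ← monomial_single_add]
    using bianchi

lemma curvature_action : curvature (action B) = 0 := by
  have flat (n : ℕ) : ∀ (x y : L), ∀ p ∈ degreeLT I R n, curvature (action B) x y p = 0 := by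
    induction n with
    | zero =>
      exact fun x y p ↦
        curvature_action_eq_zero_of_monomial B (fun _ _ _ _ hM ↦ absurd hM (Nat.not_lt_zero _)) x y
    | succ n ih =>
      refine fun x y p ↦ curvature_action_eq_zero_of_monomial B (fun i j M hji hM ↦ ?_) x y
      obtain hj | ⟨k, N, hkj, hk, rfl⟩ := forall_le_or_exists_single_add j M
      · exact curvature_action_monomial_of_le B hji hj
      · rw [map_add, Finsupp.degree_single] at hM
        exact curvature_action_monomial_single_add B hkj hji hk fun x y q hq ↦
          ih x y q (degreeLT_mono (by omega) hq)
  ext1 x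
  ext1 y
  exact LinearMap.ext fun p ↦ flat _ x y p (mem_degreeLT_succ.2 le_rfl)

lemma action_action (x y : L) (p : MvPolynomial I R) :
    action B x (action B y p) = action B y (action B x p) + action B ⁅x, y⁆ p := by
  have := LinearMap.congr_fun (LinearMap.congr_fun₂ (curvature_action B) x y) p
  rw [curvature_end_apply] at this
  rw [← sub_eq_zero, ← sub_sub]
  exact this

/-- The action of `L` on polynomials, extended to the enveloping algebra. -/
noncomputable def envelopingAction :
    UniversalEnvelopingAlgebra R L →ₐ[R] Module.End R (MvPolynomial I R) :=
  UniversalEnvelopingAlgebra.lift R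
    { action B with
      map_lie' := fun {x y} ↦
        (sub_eq_zero.1 <| LinearMap.congr_fun₂ (curvature_action B) x y).symm }

lemma envelopingAction_ι (x : L) :
    envelopingAction B (ι R x) = action B x :=
  UniversalEnvelopingAlgebra.lift_ι_apply R _ x

end Flatness

section NormalOrdering

attribute [local instance] LieRing.ofAssociativeRing

/-- The linear map sending a monomial to the product of its variables in increasing order. -/
noncomputable def normalOrdering : MvPolynomial I R →ₗ[R] UniversalEnvelopingAlgebra R L :=
  (basisMonomials I R).constr R fun M ↦
    ((orderedWord M).map fun i ↦ ι R (B i)).prod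

lemma normalOrdering_one : normalOrdering B 1 = 1 := by
  rw [← monomial_zero_one, normalOrdering, constr_basisMonomials_monomial, orderedWord_zero,
    List.map_nil, List.prod_nil]

lemma normalOrdering_C (c : R) : normalOrdering B (C c) = algebraMap R _ c := by
  rw [C_eq_smul_one, map_smul, normalOrdering_one, Algebra.algebraMap_eq_smul_one]

lemma normalOrdering_X_mul_monomial {j : I} (hj : ∀ k ∈ M.support, j ≤ k) :
    normalOrdering B (X j * monomial M 1) =
      ι R (B j) * normalOrdering B (monomial M 1) := by
  rw [← monomial_single_add, normalOrdering, constr_basisMonomials_monomial,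
    constr_basisMonomials_monomial, orderedWord_single_add hj, List.map_cons, List.prod_cons]

lemma normalOrdering_action_monomial_single_add {i j : I} (hji : j < i)
    (hj : ∀ k ∈ N.support, j ≤ k)
    (h : ∀ (x : L), ∀ q ∈ degreeLT I R (N.degree + 1),
      normalOrdering B (action B x q) = ι R x * normalOrdering B q) :
    normalOrdering B (action B (B i) (X j * monomial N 1)) =
      ι R (B i) * normalOrdering B (X j * monomial N 1) := by
  have hN : monomial N (1 : R) ∈ degreeLT I R (N.degree + 1) :=
    monomial_mem_degreeLT (Nat.lt_succ_self _)
  have hij : ∀ k ∈ (Finsupp.single i 1 + N).support, j ≤ k := forall_le_single_add hji.le hj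
  have leading : normalOrdering B (action B (B j) (X i * monomial N 1)) =
      ι R (B j) * normalOrdering B (X i * monomial N 1) := by
    rw [← monomial_single_add, action_monomial_of_le B hij, normalOrdering_X_mul_monomial B hij]
  have lower := h (B j) _ (hasSymbolAction_action B (B i) _ _ hN)
  have swapped : normalOrdering B (action B (B j) (action B (B i) (monomial N 1))) =
      ι R (B j) * normalOrdering B (action B (B i) (monomial N 1)) := by
    rw [symbolAction_basis, map_sub, map_sub, map_sub, leading, mul_sub] at lower
    exact sub_left_inj.1 lower
  rw [← action_monomial_of_le B hj, action_action, map_add, swapped, h _ _ hN, h _ _ hN,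
    action_monomial_of_le B hj, normalOrdering_X_mul_monomial B hj, ← mul_assoc, ← mul_assoc,
    ← add_mul, ι_mul_ι (B i)]

lemma normalOrdering_action (x : L) (p : MvPolynomial I R) :
    normalOrdering B (action B x p) =
      ι R x * normalOrdering B p := by
  suffices ∀ (n : ℕ) (x : L), ∀ p ∈ degreeLT I R n, normalOrdering B (action B x p) =
      ι R x * normalOrdering B p from
    this _ x p (mem_degreeLT_succ.2 le_rfl)
  intro n
  let Φ := (action B).compr₂ (normalOrdering B)
  let Ψ := (LinearMap.mul R (UniversalEnvelopingAlgebra R L)).compl₁₂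
    (ι R : L →ₗ⁅R⁆ UniversalEnvelopingAlgebra R L).toLinearMap (normalOrdering B)
  induction n with
  | zero =>
    exact fun x p ↦ apply_eq_of_basis B (Φ := Φ) (Ψ := Ψ)
      (fun _ _ hM ↦ absurd hM (Nat.not_lt_zero _)) x
  | succ n ih =>
    refine fun x p ↦ apply_eq_of_basis B (Φ := Φ) (Ψ := Ψ) (fun i M hM ↦ ?_) x
    change normalOrdering B (action B (B i) (monomial M 1)) =
      ι R (B i) * normalOrdering B (monomial M 1)
    obtain hi | ⟨j, N, hji, hj, rfl⟩ := forall_le_or_exists_single_add i M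
    · rw [action_monomial_of_le B hi, normalOrdering_X_mul_monomial B hi]
    · rw [map_add, Finsupp.degree_single] at hM
      rw [monomial_single_add]
      exact normalOrdering_action_monomial_single_add B hji hj fun x q hq ↦
        ih x q (degreeLT_mono (by omega) hq)

lemma normalOrdering_envelopingAction (a : UniversalEnvelopingAlgebra R L) (p : MvPolynomial I R) :
    normalOrdering B (envelopingAction B a p) = a * normalOrdering B p := by
  have ha : a ∈ Algebra.adjoin R (Set.range (ι R (L := L))) :=
    adjoin_range_ι R L ▸ Algebra.mem_top
  induction ha using Algebra.adjoin_induction generalizing p with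
  | mem _ hx =>
    obtain ⟨x, rfl⟩ := hx
    rw [envelopingAction_ι, normalOrdering_action]
  | algebraMap c => rw [AlgHom.commutes, Module.algebraMap_end_apply, map_smul, Algebra.smul_def]
  | add a b _ _ iha ihb => rw [map_add, LinearMap.add_apply, map_add, iha, ihb, add_mul]
  | mul a b _ _ iha ihb => rw [map_mul, Module.End.mul_apply, iha, ihb, mul_assoc]

lemma envelopingAction_normalOrdering_X_mul_monomial {j : I} (hj : ∀ k ∈ M.support, j ≤ k)
    (p : MvPolynomial I R) :
    envelopingAction B (normalOrdering B (X j * monomial M 1)) p =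
      action B (B j) (envelopingAction B (normalOrdering B (monomial M 1)) p) := by
  rw [normalOrdering_X_mul_monomial B hj, map_mul, Module.End.mul_apply, envelopingAction_ι]

lemma envelopingAction_normalOrdering_one (p : MvPolynomial I R) :
    envelopingAction B (normalOrdering B p) 1 = p := by
  suffices (envelopingAction B).toLinearMap.flip 1 ∘ₗ normalOrdering B = LinearMap.id from
    LinearMap.congr_fun this p
  refine (basisMonomials I R).ext fun M ↦ ?_
  change envelopingAction B (normalOrdering B (monomial M 1)) 1 = monomial M 1
  induction M using exponent_induction with
  | zero =>
    rw [monomial_zero_one, normalOrdering_one, map_one (envelopingAction B), Module.End.one_apply]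
  | single_add j M hj ih =>
    rw [monomial_single_add, envelopingAction_normalOrdering_X_mul_monomial B hj, ih,
      action_monomial_of_le B hj]

/-- The Poincaré–Birkhoff–Witt isomorphism: ordered products of basis vectors form a basis of the
enveloping algebra. -/
noncomputable def normalOrderingEquiv :
    MvPolynomial I R ≃ₗ[R] UniversalEnvelopingAlgebra R L where
  __ := normalOrdering B
  invFun a := envelopingAction B a 1
  left_inv := envelopingAction_normalOrdering_one B
  right_inv a := by
    change normalOrdering B (envelopingAction B a 1) = a
    rw [normalOrdering_envelopingAction, normalOrdering_one, mul_one]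

lemma normalOrderingEquiv_symm_mul (a b : UniversalEnvelopingAlgebra R L) :
    (normalOrderingEquiv B).symm (a * b) = envelopingAction B a ((normalOrderingEquiv B).symm b) :=
  LinearMap.congr_fun (map_mul (envelopingAction B) a b) 1

lemma normalOrderingEquiv_C (c : R) : normalOrderingEquiv B (C c) = algebraMap R _ c :=
  normalOrdering_C B c

end NormalOrdering

section Symbol

lemma envelopingAction_normalOrdering_monomial_sub_mem (M : I →₀ ℕ)
    (hp : p ∈ degreeLT I R (n + 1)) :
    envelopingAction B (normalOrdering B (monomial M 1)) p - monomial M 1 * p ∈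
      degreeLT I R (n + M.degree) := by
  induction M using exponent_induction with
  | zero =>
    simp only [monomial_zero_one, normalOrdering_one, map_one, Module.End.one_apply, one_mul,
      sub_self, zero_mem]
  | single_add j M hj ih =>
    rw [monomial_single_add, envelopingAction_normalOrdering_X_mul_monomial B hj, map_add,
      Finsupp.degree_single, add_comm 1, ← add_assoc, mul_assoc]
    set r := envelopingAction B (normalOrdering B (monomial M 1)) p
    have r_mem : r ∈ degreeLT I R (n + M.degree + 1) := by
      rw [← sub_add_cancel r (monomial M 1 * p), add_right_comm]
      exact add_mem (degreeLT_mono (by omega) ih) (monomial_mul_mem_degreeLT hp)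
    have action_sub_mem := hasSymbolAction_action B (B j) _ _ r_mem
    rw [symbolAction_basis] at action_sub_mem
    convert add_mem action_sub_mem (X_mul_mem_degreeLT j ih) using 1
    ring

lemma envelopingAction_normalOrdering_sub_mem (hq : q ∈ degreeLT I R (m + 1))
    (hp : p ∈ degreeLT I R (n + 1)) :
    envelopingAction B (normalOrdering B q) p - q * p ∈ degreeLT I R (m + n) := by
  suffices degreeLT I R (m + 1) ≤ (degreeLT I R (m + n)).comap
      ((envelopingAction B).toLinearMap.flip p ∘ₗ normalOrdering B - LinearMap.mulRight R p) from
    this hq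
  exact degreeLT_le_iff.2 fun M hM ↦
    degreeLT_mono (by omega) (envelopingAction_normalOrdering_monomial_sub_mem B M hp)

lemma totalDegree_normalOrderingEquiv_symm_mul [IsDomain R] {a b : UniversalEnvelopingAlgebra R L}
    (ha : a ≠ 0) (hb : b ≠ 0) :
    ((normalOrderingEquiv B).symm (a * b)).totalDegree =
      ((normalOrderingEquiv B).symm a).totalDegree +
        ((normalOrderingEquiv B).symm b).totalDegree := by
  set e := normalOrderingEquiv B
  have symm_ne_zero {u : UniversalEnvelopingAlgebra R L} (hu : u ≠ 0) : e.symm u ≠ 0 :=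
    (map_ne_zero_iff _ e.symm.injective).2 hu
  have degree_mul := totalDegree_mul_of_isDomain (symm_ne_zero ha) (symm_ne_zero hb)
  have lower := envelopingAction_normalOrdering_sub_mem B
    (mem_degreeLT_succ.2 (le_refl (e.symm a).totalDegree))
    (mem_degreeLT_succ.2 (le_refl (e.symm b).totalDegree))
  have normalOrdering_symm : normalOrdering B (e.symm a) = a := e.apply_symm_apply a
  rw [normalOrdering_symm, ← normalOrderingEquiv_symm_mul, ← degree_mul] at lower
  rw [totalDegree_eq_of_sub_mem_degreeLT lower, degree_mul]

end Symbol

end Action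

end PoincareBirkhoffWitt

open PoincareBirkhoffWitt in
theorem universalEnvelopingAlgebra_one_sided_units_general {R L : Type*} [CommRing R] [IsDomain R]
    [LieRing L] [LieAlgebra R L] [Module.Free R L] {a b : UniversalEnvelopingAlgebra R L}
    (h : a * b = 1) :
    ∃ c : Rˣ, a = algebraMap R (UniversalEnvelopingAlgebra R L) c ∧
      b = algebraMap R (UniversalEnvelopingAlgebra R L) ↑c⁻¹ := by
  obtain ⟨_, _⟩ := exists_wellFoundedGT (Module.Free.ChooseBasisIndex R L)
  let e := normalOrderingEquiv (Module.Free.chooseBasis R L)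
  have e_C (c : R) : e (C c) = algebraMap R _ c := normalOrderingEquiv_C _ c
  have : Nontrivial (UniversalEnvelopingAlgebra R L) := e.symm.toEquiv.nontrivial
  have degree_add : (e.symm a).totalDegree + (e.symm b).totalDegree = 0 := by
    rw [← totalDegree_normalOrderingEquiv_symm_mul _ (left_ne_zero_of_mul_eq_one h)
      (right_ne_zero_of_mul_eq_one h), h, ← map_one (algebraMap R _), ← e_C, e.symm_apply_apply,
      totalDegree_C]
  have eq_algebraMap {u : UniversalEnvelopingAlgebra R L} (hu : (e.symm u).totalDegree = 0) :
      ∃ c : R, u = algebraMap R _ c := by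
    refine ⟨(e.symm u).coeff 0, ?_⟩
    rw [← e_C, ← totalDegree_eq_zero_iff_eq_C.1 hu, e.apply_symm_apply]
  obtain ⟨c, rfl⟩ := eq_algebraMap (Nat.add_eq_zero_iff.1 degree_add).1
  obtain ⟨d, rfl⟩ := eq_algebraMap (Nat.add_eq_zero_iff.1 degree_add).2
  have hcd : c * d = 1 := by
    apply C_injective (Module.Free.ChooseBasisIndex R L) R
    apply e.injective
    rw [e_C, e_C, map_mul, h, map_one]
  exact ⟨Units.mkOfMulEqOne c d hcd, rfl, rfl⟩

theorem universalEnvelopingAlgebra_one_sided_units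
    (K : Type v) [Field K] (L : Type u) [LieRing L] [LieAlgebra K L]
    (a b : UniversalEnvelopingAlgebra K L) (h : a * b = 1) :
    ∃ c : K, c ≠ 0 ∧
      a = algebraMap K (UniversalEnvelopingAlgebra K L) c ∧
      b = algebraMap K (UniversalEnvelopingAlgebra K L) c⁻¹ := by
  obtain ⟨c, ha, hb⟩ := universalEnvelopingAlgebra_one_sided_units_general h
  exact ⟨c, c.ne_zero, ha, by rw [hb, Units.val_inv_eq_inv_val]⟩
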